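/- Every graft obtainable from the graft (K₂,{t}) (where K₂ is the complete graph on two vertices and t is one of its two vertices) by a finite sequence of pendent, clone, and join operations is clean; in particular, the underlying graph of any such graft contains no induced wheel. -/

import Mathlib

universe u

/-- A *wheel* is a graph consisting of an induced cycle of length at least 4 together with a
single additional vertex (the hub) having at least 3 neighbours on the cycle. -/
def IsWheel {V : Type u} (G : SimpleGraph V) : Prop :=
  ∃ (w : V) (n : ℕ), 4 ≤ n ∧
    Nonempty (G.induce {u | u ≠ w} ≃g SimpleGraph.cycleGraph n) ∧
    3 ≤ (G.neighborSet w).ncard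

/-- A graph is a *fan with pivot `f`* if deleting `f` leaves an induced path and `f` has at
least 3 neighbours (necessarily on that path). -/
def IsFanWithPivot {V : Type u} (G : SimpleGraph V) (f : V) : Prop :=
  (∃ n : ℕ, Nonempty (G.induce {u | u ≠ f} ≃g SimpleGraph.pathGraph n)) ∧
    3 ≤ (G.neighborSet f).ncard

/-- A *fan* is a graph consisting of an induced path and a single additional vertex (the pivot)
with at least 3 neighbours on the path. -/
def IsFan {V : Type u} (G : SimpleGraph V) : Prop :=
  ∃ f : V, IsFanWithPivot G f

/-- A *guarded fan* is a graft `(F, M)` such that `F` is a fan with pivot `f` and both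
endpoints of the path `F \ {f}` lie in `M`. -/
def IsGuardedFan {V : Type u} (G : SimpleGraph V) (M : Set V) : Prop :=
  ∃ (f : V) (n : ℕ) (e : G.induce {u | u ≠ f} ≃g SimpleGraph.pathGraph (n + 1)),
    3 ≤ (G.neighborSet f).ncard ∧
    ((e.symm 0 : {u // u ≠ f}) : V) ∈ M ∧ ((e.symm (Fin.last n) : {u // u ≠ f}) : V) ∈ M

/-- A *mountable path* is a graft `(P, M)` such that `P` is a path and `|M| ≥ 3`. -/
def IsMountablePath {V : Type u} (G : SimpleGraph V) (M : Set V) : Prop :=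
  (∃ n : ℕ, Nonempty (G ≃g SimpleGraph.pathGraph n)) ∧ 3 ≤ M.ncard

/-- A *theta* is a graph consisting of three internally vertex-disjoint paths of length at
least 2 with common endpoints, such that every edge lies on one of the three paths. -/
def IsTheta {V : Type u} (G : SimpleGraph V) : Prop :=
  ∃ (a b : V) (p₁ p₂ p₃ : G.Walk a b),
    a ≠ b ∧ p₁.IsPath ∧ p₂.IsPath ∧ p₃.IsPath ∧
    2 ≤ p₁.length ∧ 2 ≤ p₂.length ∧ 2 ≤ p₃.length ∧
    (∀ v, v ∈ p₁.support → v ∈ p₂.support → v = a ∨ v = b) ∧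
    (∀ v, v ∈ p₁.support → v ∈ p₃.support → v = a ∨ v = b) ∧
    (∀ v, v ∈ p₂.support → v ∈ p₃.support → v = a ∨ v = b) ∧
    (∀ v : V, v ∈ p₁.support ∨ v ∈ p₂.support ∨ v ∈ p₃.support) ∧
    (∀ e ∈ G.edgeSet, e ∈ p₁.edges ∨ e ∈ p₂.edges ∨ e ∈ p₃.edges)

/-- A graft `(G, T)` is *clean* if (1) `G` is triangle-free, (2) `T` is a stable set,
(3) `G` contains no induced wheel, (4) `(G,T)` contains no induced guarded fan, and
(5) `(G,T)` contains no induced mountable path. -/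
def IsCleanGraft {V : Type u} (G : SimpleGraph V) (T : Set V) : Prop :=
  G.CliqueFree 3 ∧
  (∀ u ∈ T, ∀ v ∈ T, ¬ G.Adj u v) ∧
  (∀ s : Set V, ¬ IsWheel (G.induce s)) ∧
  (∀ s : Set V, ¬ IsGuardedFan (G.induce s) (Subtype.val ⁻¹' T)) ∧
  (∀ s : Set V, ¬ IsMountablePath (G.induce s) (Subtype.val ⁻¹' T))

/-- The graph of `pendent((G,T),t)`: a new vertex (`none`) is added whose only
neighbour is `t`. -/
def pendentGraph {V : Type u} (G : SimpleGraph V) (t : V) : SimpleGraph (Option V) :=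
  SimpleGraph.fromRel (fun a b =>
    (∃ u v : V, a = some u ∧ b = some v ∧ G.Adj u v) ∨ (a = none ∧ b = some t))

/-- The distinguished set of `pendent((G,T),t)`: `T' = (T ∪ {t'}) \ {t}`. -/
def pendentT {V : Type u} (T : Set V) (t : V) : Set (Option V) :=
  insert none (some '' (T \ {t}))

/-- The graph of `clone((G,T),t)`: a new vertex (`none`) is added whose neighbourhood is
exactly the neighbourhood of `t` in `G`. -/
def cloneGraph {V : Type u} (G : SimpleGraph V) (t : V) : SimpleGraph (Option V) :=
  SimpleGraph.fromRel (fun a b =>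
    (∃ u v : V, a = some u ∧ b = some v ∧ G.Adj u v) ∨
    (∃ v : V, a = none ∧ b = some v ∧ G.Adj t v))

/-- The distinguished set of `clone((G,T),t)`: `T' = T ∪ {t'}`. -/
def cloneT {V : Type u} (T : Set V) : Set (Option V) :=
  insert none (some '' T)

/-- The graph of `join((G₁,T₁), X, (G₂,T₂))`, where the bijection `φ : X ≃ T₂` prescribes
which vertex of `T₂` is identified with which vertex of `X`. -/
def joinGraph {V₁ V₂ : Type u} (G₁ : SimpleGraph V₁) (G₂ : SimpleGraph V₂)
    (X : Set V₁) (T₂ : Set V₂) (φ : X ≃ T₂) :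
    SimpleGraph (V₁ ⊕ {v : V₂ // v ∉ T₂}) :=
  SimpleGraph.fromRel (fun a b =>
    (∃ u v : V₁, a = Sum.inl u ∧ b = Sum.inl v ∧ G₁.Adj u v) ∨
    (∃ u v : {v : V₂ // v ∉ T₂}, a = Sum.inr u ∧ b = Sum.inr v ∧ G₂.Adj ↑u ↑v) ∨
    (∃ (x : X) (w : {v : V₂ // v ∉ T₂}), a = Sum.inl ↑x ∧ b = Sum.inr w ∧ G₂.Adj ↑(φ x) ↑w) ∨
    (∃ x y : X, a = Sum.inl ↑x ∧ b = Sum.inl ↑y ∧ G₂.Adj ↑(φ x) ↑(φ y)))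

/-- The distinguished set of `join((G₁,T₁), X, (G₂,T₂))` is `T₁`. -/
def joinT {V₁ V₂ : Type u} (T₁ : Set V₁) (T₂ : Set V₂) : Set (V₁ ⊕ {v : V₂ // v ∉ T₂}) :=
  Sum.inl '' T₁

/-- A *graph–stable-set pair*: a graph together with a set of (stable) sets of vertices. -/
structure GSPair : Type 1 where
  V : Type
  G : SimpleGraph V
  S : Set (Set V)

/-- The `NEXT` procedure of the Burling construction.  The new vertex type consists of the
original vertices, the vertices `(S, u)` of the copy `H_S` for each `S ∈ 𝒮`, and the new
vertices `v_{S,T}` for `S ∈ 𝒮` and `T ∈ 𝒮(H_S)`. -/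
def NEXT (P : GSPair) : GSPair where
  V := P.V ⊕ ((↥P.S × P.V) ⊕ (↥P.S × ↥P.S))
  G := SimpleGraph.fromRel (fun a b =>
    (∃ u v : P.V, a = Sum.inl u ∧ b = Sum.inl v ∧ P.G.Adj u v) ∨
    (∃ (S : ↥P.S) (u v : P.V),
      a = Sum.inr (Sum.inl (S, u)) ∧ b = Sum.inr (Sum.inl (S, v)) ∧ P.G.Adj u v) ∨
    (∃ (S T : ↥P.S) (u : P.V),
      a = Sum.inr (Sum.inr (S, T)) ∧ b = Sum.inr (Sum.inl (S, u)) ∧ u ∈ (T : Set P.V)))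
  S := { A | ∃ S T : ↥P.S,
      A = Sum.inl '' (S : Set P.V) ∪ (fun u => Sum.inr (Sum.inl (S, u))) '' (T : Set P.V) ∨
      A = insert (Sum.inr (Sum.inr (S, T))) (Sum.inl '' (S : Set P.V)) }

/-- `BurlingPair k` is the graph–stable-set pair `(G'_{k+1}, 𝒮_{k+1})`; in particular
`BurlingPair 0 = (K₁, {V(K₁)})` and `(BurlingPair (k-1)).G` is the `k`-th Burling graph. -/
def BurlingPair : ℕ → GSPair
  | 0 => ⟨Unit, ⊥, {Set.univ}⟩
  | (k + 1) => NEXT (BurlingPair k)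

/-- A *graft*: a graph together with a distinguished set of vertices. -/
structure GraftData : Type 1 where
  V : Type
  G : SimpleGraph V
  T : Set V

/-- The step `(G_k, T_k) ↦ (G_{k+1}, T_{k+1})` of the graft construction of Burling graphs,
with all the pendent, clone and join operations of the construction performed at once.

Vertices: `inl x` for `x ∈ V(G_k)`; `inr (inl ⟨u, w⟩)` for `u ∈ T_k` and
`w : ↥T_k ⊕ ↥T_k` with `w ≠ inl u`, the `2|T_k| - 1` clones of `u` (so that
`X_u = {u} ∪ {⟨u, w⟩}` has been identified with `S'_u ≃ T_k ⊕ T_k`, the vertex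
indexed by `inl v` being the copy of `v` in `S_u` and the vertex indexed by `inr v`
being the pendant `t_{u,v}`); and `inr (inr (u, y))` for the vertices of the copy
`H'_u` not in `S'_u`, namely `y = inl x` for a copy of `x ∈ V(G_k) \ T_k` and
`y = inr v` for the clone `v_u` of `v ∈ T_k`. -/
def nextGraft (P : GraftData) : GraftData where
  V := P.V ⊕ ((Σ u : ↥P.T, {w : ↥P.T ⊕ ↥P.T // w ≠ Sum.inl u}) ⊕
        (↥P.T × ({v : P.V // v ∉ P.T} ⊕ ↥P.T)))
  G := SimpleGraph.fromRel (fun a b =>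
    -- edges of `G_k`
    (∃ x y : P.V, a = Sum.inl x ∧ b = Sum.inl y ∧ P.G.Adj x y) ∨
    -- each clone of `u` is adjacent to `N_{G_k}(u)`
    (∃ (x : P.V) (u : ↥P.T) (w : {w : ↥P.T ⊕ ↥P.T // w ≠ Sum.inl u}),
      a = Sum.inl x ∧ b = Sum.inr (Sum.inl ⟨u, w⟩) ∧ P.G.Adj ↑u x) ∨
    -- `u` (identified with the copy of `u` in `S_u`) is adjacent to the copies of `N_{G_k}(u)`
    (∃ (u : ↥P.T) (x : {v : P.V // v ∉ P.T}),
      a = Sum.inl ↑u ∧ b = Sum.inr (Sum.inr (u, Sum.inl x)) ∧ P.G.Adj ↑u ↑x) ∨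
    -- the clone of `u` identified with the copy of `v ∈ S_u` is adjacent to copies of `N(v)`
    (∃ (u : ↥P.T) (w : {w : ↥P.T ⊕ ↥P.T // w ≠ Sum.inl u}) (v : ↥P.T)
        (x : {v : P.V // v ∉ P.T}),
      a = Sum.inr (Sum.inl ⟨u, w⟩) ∧ b = Sum.inr (Sum.inr (u, Sum.inl x)) ∧
        (w : ↥P.T ⊕ ↥P.T) = Sum.inl v ∧ P.G.Adj ↑v ↑x) ∨
    -- the clone of `u` identified with the pendant `t_{u,v}` is adjacent to the clone `v_u`
    (∃ (u : ↥P.T) (w : {w : ↥P.T ⊕ ↥P.T // w ≠ Sum.inl u}) (v : ↥P.T),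
      a = Sum.inr (Sum.inl ⟨u, w⟩) ∧ b = Sum.inr (Sum.inr (u, Sum.inr v)) ∧
        (w : ↥P.T ⊕ ↥P.T) = Sum.inr v) ∨
    -- edges of `G_k` inside the copy `H'_u`
    (∃ (u : ↥P.T) (x y : {v : P.V // v ∉ P.T}),
      a = Sum.inr (Sum.inr (u, Sum.inl x)) ∧ b = Sum.inr (Sum.inr (u, Sum.inl y)) ∧
        P.G.Adj ↑x ↑y) ∨
    -- the clone `v_u` is adjacent to the copies of `N_{G_k}(v)`
    (∃ (u : ↥P.T) (x : {v : P.V // v ∉ P.T}) (v : ↥P.T),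
      a = Sum.inr (Sum.inr (u, Sum.inl x)) ∧ b = Sum.inr (Sum.inr (u, Sum.inr v)) ∧
        P.G.Adj ↑v ↑x))
  T := { a | (∃ u ∈ P.T, a = Sum.inl u) ∨
      (∃ c : (Σ u : ↥P.T, {w : ↥P.T ⊕ ↥P.T // w ≠ Sum.inl u}), a = Sum.inr (Sum.inl c)) }

/-- `BurlingGraft k` is the graft `(G_{k+1}, T_{k+1})`; in particular
`BurlingGraft 0 = (K₂, {t})`. -/
def BurlingGraft : ℕ → GraftData
  | 0 => ⟨Bool, ⊤, {true}⟩
  | (k + 1) => nextGraft (BurlingGraft k)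

/-- The graph `G*` obtained from a graph–stable-set pair by adding, for each `S ∈ 𝒮`,
a new vertex `v_S` whose neighbourhood is exactly `S`. -/
def GStar (P : GSPair) : SimpleGraph (P.V ⊕ ↥P.S) :=
  SimpleGraph.fromRel (fun a b =>
    (∃ u v : P.V, a = Sum.inl u ∧ b = Sum.inl v ∧ P.G.Adj u v) ∨
    (∃ (S : ↥P.S) (u : P.V), a = Sum.inr S ∧ b = Sum.inl u ∧ u ∈ (S : Set P.V)))

/-- The grafts obtainable from the graft `(K₂, {t})` by a finite sequence of pendent,
clone and join operations. -/
inductive Obtainable : GraftData → Prop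
  | base : Obtainable ⟨Bool, ⊤, {true}⟩
  | pendent (P : GraftData) (hP : Obtainable P) (t : P.V) (ht : t ∈ P.T) :
      Obtainable ⟨Option P.V, pendentGraph P.G t, pendentT P.T t⟩
  | clone (P : GraftData) (hP : Obtainable P) (t : P.V) (ht : t ∈ P.T) :
      Obtainable ⟨Option P.V, cloneGraph P.G t, cloneT P.T⟩
  | join (P Q : GraftData) (hP : Obtainable P) (hQ : Obtainable Q)
      (X : Set P.V) (hX : X ⊆ P.T)
      (hnb : ∀ x ∈ X, ∀ y ∈ X, P.G.neighborSet x = P.G.neighborSet y)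
      (φ : X ≃ ↥Q.T) :
      Obtainable ⟨P.V ⊕ {v : Q.V // v ∉ Q.T}, joinGraph P.G Q.G X Q.T φ, Sum.inl '' P.T⟩

/-!
Add to a graft `(G, T)` an apex adjacent to exactly the vertices of `T`. The graft is clean as soon
as its cone has no triangle, no vertex with three neighbours on a hole, and no induced path with
three neighbours of the apex: stability of `T` excludes triangles through the apex, a mountable path
has three neighbours of the apex, and the path of a guarded fan becomes a hole when closed through
the apex. This stronger property of the cone survives the three operations. A pendent subdivides
the edge from the apex to `t`, a clone adds a twin of `t`, and a join glues a second cone to the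
first along a set of twins. In the last case any hole that is not contained in the first cone runs
through the second graft and at most one common neighbour of the twins, and each such common
neighbour plays the role of the apex of the second cone.
-/

/-- The first `n` values of `p` are the consecutive vertices of an induced path of `G`. -/
structure IsInducedPath {V : Type*} (G : SimpleGraph V) (n : ℕ) (p : ℕ → V) : Prop where
  injOn : Set.InjOn p (Set.Iio n)
  adj_iff : ∀ i < n, ∀ j < n, G.Adj (p i) (p j) ↔ j = i + 1 ∨ i = j + 1

/-- An induced path on at least three vertices together with a further vertex `v` that is adjacent
to its two ends only: an induced cycle cut open at `v`. -/
structure IsCappedPath {V : Type*} (G : SimpleGraph V) (n : ℕ) (p : ℕ → V) (v : V) : Prop where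
  isInducedPath : IsInducedPath G n p
  three_le : 3 ≤ n
  notMem : v ∉ p '' Set.Iio n
  adj_iff : ∀ i < n, G.Adj v (p i) ↔ i = 0 ∨ i + 1 = n

/-- A *hole*: the vertex set of an induced cycle of length at least four. -/
def IsHole {V : Type*} (G : SimpleGraph V) (C : Set V) : Prop :=
  ∃ n p v, IsCappedPath G n p v ∧ insert v (p '' Set.Iio n) = C

section PathsAndHoles

variable {V W : Type*} {G : SimpleGraph V} {H : SimpleGraph W} {n : ℕ} {p : ℕ → V} {v : V}

lemma encard_le_two_of_subset_pair {s : Set V} {a b : V} (h : s ⊆ {a, b}) : s.encard ≤ 2 :=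
  calc s.encard ≤ ({a, b} : Set V).encard := Set.encard_le_encard h
    _ ≤ ({b} : Set V).encard + 1 := Set.encard_insert_le _ _
    _ = 2 := by rw [Set.encard_singleton, one_add_one_eq_two]

lemma eq_of_encard_le_two {s : Set V} (hs : s.encard ≤ 2) {a b c : V} (ha : a ∈ s) (hb : b ∈ s)
    (hc : c ∈ s) : a = b ∨ a = c ∨ b = c := by
  by_contra! h
  have h3 : ({a, b, c} : Set V).encard = 3 :=
    Set.encard_eq_three.2 ⟨a, b, c, h.1, h.2.1, h.2.2, rfl⟩
  have : ({a, b, c} : Set V).encard ≤ 2 := (Set.encard_le_encard (by grind)).trans hs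
  rw [h3] at this
  exact absurd this (by norm_num)

namespace IsInducedPath

lemma subpath (hp : IsInducedPath G n p) {a m : ℕ} (h : a + m ≤ n) :
    IsInducedPath G m fun i ↦ p (a + i) where
  injOn i hi j hj hij := by
    have := hp.injOn (show a + i < n by grind) (show a + j < n by grind) hij
    omega
  adj_iff i hi j hj := by grind [hp.adj_iff (a + i) (by omega) (a + j) (by omega)]

lemma reverse (hp : IsInducedPath G n p) : IsInducedPath G n fun i ↦ p (n - 1 - i) where
  injOn i hi j hj hij := by
    have := hp.injOn (show n - 1 - i < n by grind) (show n - 1 - j < n by grind) hij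
    grind
  adj_iff i hi j hj := by grind [hp.adj_iff (n - 1 - i) (by omega) (n - 1 - j) (by omega)]

lemma encard_neighborSet_inter_le (hp : IsInducedPath G n p) (hv : v ∈ p '' Set.Iio n) :
    (G.neighborSet v ∩ p '' Set.Iio n).encard ≤ 2 := by
  obtain ⟨m, hm, rfl⟩ := hv
  refine encard_le_two_of_subset_pair (a := p (m + 1)) (b := p (m - 1)) ?_
  rintro _ ⟨hadj, i, hi, rfl⟩
  grind [(hp.adj_iff m hm i hi).1 hadj]

lemma pullback {f : W → V} {D : Set W} (hf : ∀ a ∈ D, ∀ b ∈ D, H.Adj a b ↔ G.Adj (f a) (f b))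
    {q : ℕ → W} (hqD : ∀ i < n, q i ∈ D) (hq : ∀ i < n, f (q i) = p i)
    (hp : IsInducedPath G n p) : IsInducedPath H n q where
  injOn i hi j hj hij := hp.injOn hi hj (by rw [← hq i hi, ← hq j hj, hij])
  adj_iff i hi j hj := by
    rw [hf _ (hqD i hi) _ (hqD j hj), hq i hi, hq j hj, hp.adj_iff i hi j hj]

lemma congr {G' : SimpleGraph V} {S : Set V} (h : ∀ a ∈ S, ∀ b ∈ S, G'.Adj a b ↔ G.Adj a b)
    (hpS : ∀ i < n, p i ∈ S) (hp : IsInducedPath G n p) : IsInducedPath G' n p :=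
  hp.pullback (f := id) h hpS fun _ _ ↦ rfl

lemma exists_trim (hp : IsInducedPath G n p) {S : Set V} (hS : (S ∩ p '' Set.Iio n).Nonempty) :
    ∃ m q, IsInducedPath G (m + 1) q ∧ q 0 ∈ S ∧ q m ∈ S ∧
      S ∩ p '' Set.Iio n ⊆ q '' Set.Iio (m + 1) := by
  classical
  obtain ⟨_, hxS, i, hi, rfl⟩ := hS
  have hex : ∃ i, p i ∈ S := ⟨i, hxS⟩
  set a := Nat.find hex
  set b := Nat.findGreatest (p · ∈ S) (n - 1)
  have hai : a ≤ i := Nat.find_min' hex hxS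
  have hib : i ≤ b := Nat.le_findGreatest (by grind) hxS
  have hbn : b ≤ n - 1 := Nat.findGreatest_le _
  rw [Set.mem_Iio] at hi
  refine ⟨b - a, fun i ↦ p (a + i), hp.subpath (by omega), Nat.find_spec hex, ?_, ?_⟩
  · simp only [Nat.add_sub_cancel' (hai.trans hib)]
    exact Nat.findGreatest_spec (P := (p · ∈ S)) (by omega) hxS
  · rintro _ ⟨hjS, j, hj, rfl⟩
    rw [Set.mem_Iio] at hj
    have haj : a ≤ j := Nat.find_min' hex hjS
    have hjb : j ≤ b := Nat.le_findGreatest (by omega) hjS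
    exact ⟨j - a, by grind, by simp [haj]⟩

end IsInducedPath

lemma image_Iio_reverse (n : ℕ) (p : ℕ → V) :
    (fun i ↦ p (n - 1 - i)) '' Set.Iio n = p '' Set.Iio n := by
  ext x
  constructor <;> rintro ⟨i, hi, rfl⟩ <;> exact ⟨n - 1 - i, by grind, by grind⟩

namespace IsCappedPath

lemma rotate (h : IsCappedPath G n p v) :
    IsCappedPath G n (fun i ↦ if i + 1 < n then p (i + 1) else v) (p 0) := by
  obtain ⟨⟨hinj, hadj⟩, hn, hv, hcap⟩ := h
  have hne : ∀ i < n, v ≠ p i := fun i hi hvi ↦ hv ⟨i, hi, hvi.symm⟩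
  have hinj' : ∀ i < n, ∀ j < n, p i = p j → i = j := fun i hi j hj ↦ hinj hi hj
  refine ⟨⟨fun i hi j hj hij ↦ ?_, fun i hi j hj ↦ ?_⟩, hn, ?_, fun i hi ↦ ?_⟩
  · grind
  · grind [G.adj_comm, G.irrefl]
  · rintro ⟨i, -, hpi⟩
    grind
  · grind [G.adj_comm]

lemma insert_image_rotate (hn : 0 < n) :
    insert (p 0) ((fun i ↦ if i + 1 < n then p (i + 1) else v) '' Set.Iio n) =
      insert v (p '' Set.Iio n) := by
  ext x
  simp only [Set.mem_insert_iff, Set.mem_image, Set.mem_Iio]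
  constructor
  · grind
  · rintro (rfl | ⟨_ | i, hi, rfl⟩)
    · exact .inr ⟨n - 1, by omega, by grind⟩
    · exact .inl rfl
    · exact .inr ⟨i, by omega, by grind⟩

lemma encard_neighborSet_inter_le (h : IsCappedPath G n p v) :
    (G.neighborSet v ∩ insert v (p '' Set.Iio n)).encard ≤ 2 := by
  refine encard_le_two_of_subset_pair (a := p 0) (b := p (n - 1)) ?_
  rintro _ ⟨hadj, rfl | ⟨i, hi, rfl⟩⟩
  · exact (G.irrefl hadj).elim
  · grind [(h.adj_iff i hi).1 hadj]

lemma exists_capped_apply (h : IsCappedPath G n p v) {i : ℕ} (hi : i < n) :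
    ∃ q, IsCappedPath G n q (p i) ∧ insert (p i) (q '' Set.Iio n) = insert v (p '' Set.Iio n) := by
  induction i generalizing p v with
  | zero => exact ⟨_, h.rotate, insert_image_rotate hi⟩
  | succ i ih =>
    obtain ⟨q, hq, hqC⟩ := ih h.rotate (by omega)
    rw [if_pos hi] at hq hqC
    exact ⟨q, hq, hqC.trans (insert_image_rotate (by omega))⟩

end IsCappedPath

namespace IsHole

variable {C : Set V}

lemma exists_capped (hC : IsHole G C) (hv : v ∈ C) :
    ∃ n p, IsCappedPath G n p v ∧ insert v (p '' Set.Iio n) = C := by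
  obtain ⟨n, p, u, h, rfl⟩ := hC
  obtain rfl | ⟨i, hi, rfl⟩ := hv
  · exact ⟨n, p, h, rfl⟩
  · exact ⟨n, h.exists_capped_apply hi⟩

lemma encard_neighborSet_inter_le (hC : IsHole G C) (hv : v ∈ C) :
    (G.neighborSet v ∩ C).encard ≤ 2 := by
  obtain ⟨n, p, h, rfl⟩ := hC.exists_capped hv
  exact h.encard_neighborSet_inter_le

lemma pullback {f : W → V} {D : Set W} (hf : ∀ a ∈ D, ∀ b ∈ D, H.Adj a b ↔ G.Adj (f a) (f b))
    (hinj : Set.InjOn f D) (hD : IsHole G (f '' D)) : IsHole H D := by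
  obtain ⟨n, p, v, h, hC⟩ := hD
  obtain ⟨u, huD, rfl⟩ : v ∈ f '' D := hC ▸ Set.mem_insert v _
  have : Nonempty W := ⟨u⟩
  have hlift : ∀ i < n, ∃ d ∈ D, f d = p i := fun i hi ↦
    (hC ▸ Set.mem_insert_of_mem _ ⟨i, hi, rfl⟩ : p i ∈ f '' D)
  choose! q hqD hq using hlift
  have himage : f '' (q '' Set.Iio n) = p '' Set.Iio n := by
    rw [Set.image_image]
    exact Set.image_congr hq
  refine ⟨n, q, u, ⟨h.isInducedPath.pullback hf hqD hq, h.three_le, fun hu ↦ ?_, fun i hi ↦ ?_⟩, ?_⟩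
  · exact h.notMem (himage ▸ Set.mem_image_of_mem f hu)
  · rw [hf _ huD _ (hqD i hi), hq i hi, h.adj_iff i hi]
  · refine (hinj.image_eq_image_iff (Set.insert_subset huD ?_) subset_rfl).1 ?_
    · exact Set.image_subset_iff.2 hqD
    · rw [Set.image_insert_eq, himage, hC]

lemma congr {G' : SimpleGraph V} (h : ∀ a ∈ C, ∀ b ∈ C, G'.Adj a b ↔ G.Adj a b)
    (hC : IsHole G C) : IsHole G' C :=
  IsHole.pullback (f := id) h (Set.injOn_id C) (by rwa [Set.image_id])

end IsHole

end PathsAndHoles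

section EmbeddedPathsAndCycles

variable {V : Type*} {G : SimpleGraph V} {n : ℕ}

lemma exists_isInducedPath_of_pathGraph (f : SimpleGraph.pathGraph (n + 1) ↪g G) :
    ∃ p, IsInducedPath G (n + 1) p ∧ p '' Set.Iio (n + 1) = Set.range f ∧
      ∀ i : Fin (n + 1), p i = f i := by
  have hf : ∀ i : Fin (n + 1), f (Fin.ofNat (n + 1) i) = f i := by simp
  refine ⟨fun i ↦ f (Fin.ofNat (n + 1) i), ⟨fun i hi j hj hij ↦ ?_, fun i hi j hj ↦ ?_⟩, ?_, hf⟩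
  · simpa [Fin.ext_iff, Nat.mod_eq_of_lt (Set.mem_Iio.1 hi), Nat.mod_eq_of_lt (Set.mem_Iio.1 hj)]
      using f.injective hij
  · simp only [f.map_adj_iff, SimpleGraph.pathGraph_adj, Fin.val_ofNat, Nat.mod_eq_of_lt hi,
      Nat.mod_eq_of_lt hj]
    omega
  · ext x
    constructor
    · rintro ⟨i, -, rfl⟩
      exact ⟨_, rfl⟩
    · rintro ⟨i, rfl⟩
      exact ⟨i, i.isLt, hf i⟩

lemma cycleGraph_adj_iff_of_lt {i j : Fin (n + 1)} (hij : i < j) :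
    (SimpleGraph.cycleGraph (n + 1)).Adj i j ↔ j.val = i + 1 ∨ (i.val = 0 ∧ j.val = n) := by
  have hlt : n + 1 - j.val + i.val < n + 1 := by omega
  have hge : n + 1 - i.val + j.val = (j.val - i.val) + (n + 1) := by omega
  rw [SimpleGraph.cycleGraph_adj', Fin.sub_def, Fin.sub_def]
  simp only [Nat.mod_eq_of_lt hlt, hge, Nat.add_mod_right]
  rw [Nat.mod_eq_of_lt (by omega)]
  omega

lemma isHole_range_of_cycleGraph (hn : 4 ≤ n) (f : SimpleGraph.cycleGraph n ↪g G) :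
    IsHole G (Set.range f) := by
  obtain ⟨n, rfl⟩ : ∃ m, n = m + 1 := ⟨n - 1, by omega⟩
  set c : ℕ → Fin (n + 1) := fun i ↦ Fin.ofNat (n + 1) i
  have hc : ∀ i < n + 1, (c i).val = i := fun i hi ↦ Nat.mod_eq_of_lt hi
  have hadj : ∀ i j, i < j → j < n + 1 →
      (G.Adj (f (c i)) (f (c j)) ↔ j = i + 1 ∨ i = 0 ∧ j = n) := by
    intro i j hij hj
    rw [f.map_adj_iff, cycleGraph_adj_iff_of_lt, hc _ hj, hc _ (hij.trans hj)]
    rwa [Fin.lt_def, hc _ hj, hc _ (hij.trans hj)]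
  refine ⟨n, fun i ↦ f (c (i + 1)), f (c 0), ⟨⟨fun i hi j hj hij ↦ ?_, fun i hi j hj ↦ ?_⟩,
    by omega, ?_, fun i hi ↦ ?_⟩, ?_⟩
  · have := congrArg Fin.val (f.injective hij)
    rw [hc _ (by grind), hc _ (by grind)] at this
    omega
  · grind [G.adj_comm, G.irrefl]
  · rintro ⟨i, hi, hi0⟩
    have := congrArg Fin.val (f.injective hi0)
    rw [hc _ (by grind), hc _ (by grind)] at this
    omega
  · grind
  · ext x
    constructor
    · rintro (rfl | ⟨i, -, rfl⟩) <;> exact Set.mem_range_self _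
    · rintro ⟨i, rfl⟩
      have hci : c i.val = i := Fin.ext (hc _ i.isLt)
      obtain h | ⟨j, hj⟩ : i.val = 0 ∨ ∃ j, i.val = j + 1 := by cases i.val <;> simp
      · exact .inl (by rw [← hci, h])
      · exact .inr ⟨j, by grind, by rw [← hci, hj]⟩

end EmbeddedPathsAndCycles

/-- The subgraph of `H` induced on `S` contains neither a triangle nor a wheel, and no induced path
of it contains three neighbours of the root `z`. -/
structure RootedCleanOn {W : Type*} (H : SimpleGraph W) (S : Set W) (z : W) : Prop where
  not_adj_of_adj_of_adj : ∀ a ∈ S, ∀ b ∈ S, ∀ c ∈ S, H.Adj a b → H.Adj b c → ¬ H.Adj a c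
  encard_hole_le : ∀ C ⊆ S, IsHole H C → ∀ w ∈ S, (H.neighborSet w ∩ C).encard ≤ 2
  encard_path_le : ∀ n p, IsInducedPath H n p → p '' Set.Iio n ⊆ S →
    (H.neighborSet z ∩ p '' Set.Iio n).encard ≤ 2

/-- The graph obtained from the graft `(G, T)` by adding an apex `none` with neighbourhood `T`. -/
def coneGraph {V : Type*} (G : SimpleGraph V) (T : Set V) : SimpleGraph (Option V) where
  Adj
    | some u, some v => G.Adj u v
    | none, some v => v ∈ T
    | some u, none => u ∈ T
    | none, none => False
  symm := ⟨by rintro (_ | u) (_ | v) h; exacts [h, h, h, h.symm]⟩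
  loopless := ⟨by rintro (_ | u) h; exacts [h, G.irrefl h]⟩

section Cone

variable {V W W' : Type*} {G : SimpleGraph V} {T : Set V} {H : SimpleGraph W} {H' : SimpleGraph W'}

lemma image_neighborSet_inter (f : H ↪g H') (w : W) (D : Set W) :
    f '' (H.neighborSet w ∩ D) = H'.neighborSet (f w) ∩ f '' D := by
  ext x
  constructor
  · rintro ⟨y, ⟨hy, hyD⟩, rfl⟩
    exact ⟨f.map_adj_iff.2 hy, y, hyD, rfl⟩
  · rintro ⟨hx, y, hyD, rfl⟩
    exact ⟨y, ⟨f.map_adj_iff.1 hx, hyD⟩, rfl⟩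

lemma RootedCleanOn.map {S : Set W} {z : W} (f : H ↪g H') (h : RootedCleanOn H S z) :
    RootedCleanOn H' (f '' S) (f z) where
  not_adj_of_adj_of_adj := by
    rintro _ ⟨a, ha, rfl⟩ _ ⟨b, hb, rfl⟩ _ ⟨c, hc, rfl⟩
    simpa only [f.map_adj_iff] using h.not_adj_of_adj_of_adj a ha b hb c hc
  encard_hole_le := by
    rintro C hCS hC _ ⟨w, hw, rfl⟩
    obtain ⟨D, hDS, rfl⟩ := Set.subset_image_iff.1 hCS
    rw [← image_neighborSet_inter, f.injective.encard_image]
    have hD : IsHole H D := hC.pullback (fun _ _ _ _ ↦ f.map_adj_iff.symm) f.injective.injOn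
    exact h.encard_hole_le D hDS hD w hw
  encard_path_le n p hp hpS := by
    have : Nonempty W := ⟨z⟩
    have hlift : ∀ i < n, ∃ d ∈ S, f d = p i := fun i hi ↦ hpS ⟨i, hi, rfl⟩
    choose! q hqS hq using hlift
    have himage : f '' (q '' Set.Iio n) = p '' Set.Iio n := by
      rw [Set.image_image]
      exact Set.image_congr hq
    rw [← himage, ← image_neighborSet_inter, f.injective.encard_image]
    exact h.encard_path_le n q (hp.pullback (fun _ _ _ _ ↦ f.map_adj_iff.symm) hqS hq)
      (Set.image_subset_iff.2 hqS)

/-- The embedding of the cone over `(G, T)` that sends the apex to `b` and restricts to `g`. -/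
def coneEmbedding (g : G ↪g H) {b : W} (hb : b ∉ Set.range g) (hT : ∀ v, H.Adj b (g v) ↔ v ∈ T) :
    coneGraph G T ↪g H where
  toFun o := o.elim b g
  inj' := by
    rintro (_ | u) (_ | v) h
    · rfl
    · exact (hb ⟨v, h.symm⟩).elim
    · exact (hb ⟨u, h⟩).elim
    · exact congrArg some (g.injective h)
  map_rel_iff' := by
    rintro (_ | u) (_ | v)
    · exact iff_of_false (H.irrefl) id
    · exact hT v
    · exact H.adj_comm _ _ |>.trans (hT u)
    · exact g.map_adj_iff

lemma RootedCleanOn.of_coneGraph (h : RootedCleanOn (coneGraph G T) Set.univ none) (g : G ↪g H)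
    {b : W} (hb : b ∉ Set.range g) (hT : ∀ v, H.Adj b (g v) ↔ v ∈ T) :
    RootedCleanOn H (insert b (Set.range g)) b := by
  have hrange : coneEmbedding g hb hT '' Set.univ = insert b (Set.range g) := by
    ext x
    constructor
    · rintro ⟨_ | v, -, rfl⟩
      exacts [.inl rfl, .inr ⟨v, rfl⟩]
    · rintro (rfl | ⟨v, rfl⟩)
      exacts [⟨none, trivial, rfl⟩, ⟨some v, trivial, rfl⟩]
  exact hrange ▸ h.map (coneEmbedding g hb hT)

end Cone

section Twins

variable {W : Type*} {H : SimpleGraph W} {t t' z : W}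

lemma IsHole.eq_of_twins {C : Set W} (hC : IsHole H C) (htwin : ∀ v, H.Adj t v ↔ H.Adj t' v)
    (hne : t ≠ t') (ht : t ∈ C) (ht' : t' ∈ C) :
    ∃ a b, H.Adj t a ∧ H.Adj t b ∧ C = {t, t', a, b} := by
  obtain ⟨n, q, hq, rfl⟩ := hC.exists_capped ht
  obtain ⟨i, hi, rfl⟩ := ht'.resolve_left hne.symm
  have hn := hq.three_le
  have hfirst : H.Adj t (q 0) := (hq.adj_iff 0 (by omega)).2 (.inl rfl)
  have hlast : H.Adj t (q (n - 1)) := (hq.adj_iff (n - 1) (by omega)).2 (.inr (by omega))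
  obtain ⟨rfl, rfl⟩ : i = 1 ∧ n = 3 := by
    have := (hq.isInducedPath.adj_iff i hi 0 (by omega)).1 ((htwin _).1 hfirst)
    have := (hq.isInducedPath.adj_iff i hi (n - 1) (by omega)).1 ((htwin _).1 hlast)
    omega
  refine ⟨q 0, q 2, hfirst, hlast, congrArg (insert t) ?_⟩
  ext x
  grind

lemma IsInducedPath.image_eq_of_twins {n : ℕ} {p : ℕ → W} (hp : IsInducedPath H n p)
    (htwin : ∀ v, H.Adj t v ↔ H.Adj t' v) (hne : t ≠ t') (ht : t ∈ p '' Set.Iio n)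
    (ht' : t' ∈ p '' Set.Iio n) : ∃ a, H.Adj t a ∧ p '' Set.Iio n = {t, t', a} := by
  obtain ⟨i, hi, rfl⟩ := ht
  obtain ⟨j, hj, rfl⟩ := ht'
  have hadj : ∀ k < n, (k = i + 1 ∨ i = k + 1) ↔ (k = j + 1 ∨ j = k + 1) := fun k hk ↦ by
    rw [← hp.adj_iff i hi k hk, ← hp.adj_iff j hj k hk, htwin]
  rw [Set.mem_Iio] at hi hj
  have hij : i ≠ j := fun h ↦ hne (congrArg p h)
  have hprev_left := hadj (i - 1) (by omega)
  have hprev_right := hadj (j - 1) (by omega)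
  have hnext := hadj (min i j + 1) (by omega)
  have hself := hadj i hi
  have hn : n = 3 ∧ (i = 0 ∧ j = 2 ∨ i = 2 ∧ j = 0) := by
    by_cases hlast : max i j + 1 < n
    · have hnext_last := hadj (max i j + 1) hlast
      omega
    · omega
  refine ⟨p 1, ?_, ?_⟩
  · exact (hp.adj_iff i hi 1 (by omega)).2 (by omega)
  · ext x
    grind

lemma RootedCleanOn.twin (htwin : ∀ v, H.Adj t v ↔ H.Adj t' v) (hzt : z ≠ t) (hzt' : z ≠ t')
    (h : RootedCleanOn H {t'}ᶜ z) : RootedCleanOn H {t}ᶜ z := by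
  classical
  let σ : H ↪g H := ⟨(Equiv.swap t t').toEmbedding, by
    intro a b
    grind [H.adj_comm, Equiv.toEmbedding_apply]⟩
  have hσz : σ z = z := Equiv.swap_apply_of_ne_of_ne hzt hzt'
  have hσ : σ '' {t'}ᶜ = {t}ᶜ := by
    refine (Set.image_compl_eq (Equiv.swap t t').bijective).trans ?_
    rw [Set.image_singleton, Equiv.swap_apply_right]
  exact hσz ▸ hσ ▸ h.map σ

lemma RootedCleanOn.encard_hole_le_of_twin (hne : t ≠ t') (htwin : ∀ v, H.Adj t v ↔ H.Adj t' v)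
    (h : RootedCleanOn H {t'}ᶜ z) {C : Set W} (hC : IsHole H C) (ht' : t' ∉ C) (w : W) :
    (H.neighborSet w ∩ C).encard ≤ 2 := by
  have hCt' : C ⊆ {t'}ᶜ := Set.subset_compl_singleton_iff.2 ht'
  by_cases hw : w = t'
  · have hN : H.neighborSet w = H.neighborSet t := by
      ext v
      rw [hw, H.mem_neighborSet, H.mem_neighborSet, htwin]
    exact hN ▸ h.encard_hole_le C hCt' hC t hne
  · exact h.encard_hole_le C hCt' hC w hw

theorem RootedCleanOn.univ_of_twins (hne : t ≠ t') (htwin : ∀ v, H.Adj t v ↔ H.Adj t' v)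
    (hzt : z ≠ t) (hzt' : z ≠ t') (h : RootedCleanOn H {t'}ᶜ z) : RootedCleanOn H Set.univ z := by
  classical
  have h' : RootedCleanOn H {t}ᶜ z := h.twin htwin hzt hzt'
  have htri : ∀ a b c, H.Adj a b → H.Adj b c → ¬ H.Adj a c := by
    intro a b c hab hbc hac
    have := h.not_adj_of_adj_of_adj (if a = t' then t else a) (by grind)
      (if b = t' then t else b) (by grind) (if c = t' then t else c) (by grind)
    grind [H.adj_comm, H.irrefl]
  refine ⟨fun a _ b _ c _ ↦ htri a b c, fun C _ hC w _ ↦ ?_, fun n p hp _ ↦ ?_⟩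
  · by_cases ht' : t' ∈ C
    · by_cases ht : t ∈ C
      · obtain ⟨a, b, hta, htb, rfl⟩ := hC.eq_of_twins htwin hne ht ht'
        obtain ⟨x, y, hxy⟩ : ∃ x y, H.neighborSet w ∩ {t, t', a, b} ⊆ {x, y} := by
          by_cases hwt : H.Adj w t
          · exact ⟨t, t', by grind [htri w t a, htri w t b, H.mem_neighborSet]⟩
          · exact ⟨a, b, by grind [H.mem_neighborSet, H.adj_comm]⟩
        exact encard_le_two_of_subset_pair hxy
      · exact h'.encard_hole_le_of_twin hne.symm (fun v ↦ (htwin v).symm) hC ht w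
    · exact h.encard_hole_le_of_twin hne htwin hC ht' w
  · by_cases ht' : t' ∈ p '' Set.Iio n
    · by_cases ht : t ∈ p '' Set.Iio n
      · obtain ⟨a, hta, hpta⟩ := hp.image_eq_of_twins htwin hne ht ht'
        obtain ⟨x, y, hxy⟩ : ∃ x y, H.neighborSet z ∩ p '' Set.Iio n ⊆ {x, y} := by
          rw [hpta]
          by_cases hzt : H.Adj z t
          · exact ⟨t, t', by grind [htri z t a, H.mem_neighborSet]⟩
          · exact ⟨a, a, by grind [H.mem_neighborSet, H.adj_comm]⟩
        exact encard_le_two_of_subset_pair hxy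
      · exact h'.encard_path_le n p hp (Set.subset_compl_singleton_iff.2 ht)
    · exact h.encard_path_le n p hp (Set.subset_compl_singleton_iff.2 ht')

end Twins

section Subdivision

variable {W : Type*} {H : SimpleGraph W} {t t' z : W} {n : ℕ} {p : ℕ → W}

lemma sup_edge_adj_of_notMem {S : Set W} (hS : z ∉ S ∨ t ∉ S) {a b : W} (ha : a ∈ S)
    (hb : b ∈ S) : (H ⊔ SimpleGraph.edge z t).Adj a b ↔ H.Adj a b := by
  rw [SimpleGraph.sup_adj, SimpleGraph.edge_adj]
  grind

lemma encard_neighborSet_inter_le_sup_edge (v : W) (S : Set W) :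
    (H.neighborSet v ∩ S).encard ≤ ((H ⊔ SimpleGraph.edge z t).neighborSet v ∩ S).encard :=
  Set.encard_le_encard fun _ h ↦ ⟨.inl h.1, h.2⟩

lemma IsCappedPath.isHole_sup_edge (hp : IsCappedPath H n p t') (hn : 4 ≤ n) (hz : p 0 = z)
    (ht : p (n - 1) = t) :
    IsHole (H ⊔ SimpleGraph.edge z t) (insert t' (p '' Set.Iio n) \ {t'}) := by
  subst hz ht
  have hne : ∀ i < n, i ≠ 0 → p i ≠ p 0 := fun i hi hi0 h ↦
    hi0 (hp.isInducedPath.injOn hi (show 0 < n by omega) h)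
  have hlast : ∀ i < n, p i = p (n - 1) ↔ i = n - 1 := fun i hi ↦
    ⟨fun h ↦ hp.isInducedPath.injOn hi (show n - 1 < n by omega) h, fun h ↦ h ▸ rfl⟩
  refine ⟨n - 1, fun i ↦ p (1 + i), p 0,
    ⟨(hp.isInducedPath.subpath (by omega)).congr (S := {p 0}ᶜ) ?_ ?_, by omega, ?_,
      fun i hi ↦ ?_⟩, ?_⟩
  · exact fun a ha b hb ↦ sup_edge_adj_of_notMem (.inl (by simp)) ha hb
  · exact fun i hi ↦ hne _ (by omega) (by omega)
  · rintro ⟨i, hi, h⟩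
    exact hne _ (by grind) (by omega) h
  · rw [SimpleGraph.sup_adj, SimpleGraph.edge_adj,
      hp.isInducedPath.adj_iff 0 (by omega) (1 + i) (by omega)]
    grind
  · rw [Set.insert_sdiff_self_of_notMem hp.notMem]
    ext x
    constructor
    · grind
    · rintro ⟨_ | i, hi, rfl⟩
      exacts [.inl rfl, .inr ⟨i, by grind, by grind⟩]

lemma IsHole.sdiff_subdivision {C : Set W} (hsub : ∀ v, H.Adj t' v ↔ v = z ∨ v = t)
    (hzt : ∀ a ≠ t', H.Adj z a → ¬ H.Adj a t) (hC : IsHole H C) (ht' : t' ∈ C) :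
    z ∈ C ∧ t ∈ C ∧ IsHole (H ⊔ SimpleGraph.edge z t) (C \ {t'}) := by
  obtain ⟨n, p, hp, rfl⟩ := hC.exists_capped ht'
  have hn := hp.three_le
  have hfirst := (hsub _).1 ((hp.adj_iff 0 (by omega)).2 (.inl rfl))
  have hlast := (hsub _).1 ((hp.adj_iff (n - 1) (by omega)).2 (.inr (by omega)))
  have hends : p 0 ≠ p (n - 1) := fun h ↦ by
    have := hp.isInducedPath.injOn (show 0 < n by omega) (show n - 1 < n by omega) h
    omega
  have hfour : 4 ≤ n := by
    by_contra h
    obtain rfl : n = 3 := by omega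
    have h01 := (hp.isInducedPath.adj_iff 0 (by omega) 1 (by omega)).2 (by omega)
    have h12 := (hp.isInducedPath.adj_iff 1 (by omega) 2 (by omega)).2 (by omega)
    have h1 : p 1 ≠ t' := fun h ↦ hp.notMem ⟨1, by simp, h⟩
    grind [H.adj_comm]
  have hmem : ∀ i < n, p i ∈ insert t' (p '' Set.Iio n) := fun i hi ↦ .inr ⟨i, hi, rfl⟩
  have hmem0 := hmem 0 (by omega)
  have hmem1 := hmem (n - 1) (by omega)
  obtain ⟨h0, h1⟩ | ⟨h0, h1⟩ : (p 0 = z ∧ p (n - 1) = t) ∨ (p 0 = t ∧ p (n - 1) = z) := by grind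
  · exact ⟨h0 ▸ hmem0, h1 ▸ hmem1, hp.isHole_sup_edge hfour h0 h1⟩
  · exact ⟨h1 ▸ hmem1, h0 ▸ hmem0, SimpleGraph.edge_comm t z ▸ hp.isHole_sup_edge hfour h0 h1⟩

namespace RootedCleanOn

-- Cut open at `z`, such a hole would be a path with three neighbours of `z` once `zt` is an edge.
lemma notMem_hole_of_sup_edge {C : Set W} (h : RootedCleanOn (H ⊔ SimpleGraph.edge z t) {t'}ᶜ z)
    (hzt : ¬ H.Adj z t) (hne : z ≠ t) (hC : IsHole H C) (ht' : t' ∉ C) : z ∉ C ∨ t ∉ C := by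
  by_contra! hmem
  obtain ⟨n, p, hp, rfl⟩ := hC.exists_capped hmem.1
  obtain ⟨i, hi, rfl⟩ := hmem.2.resolve_left hne.symm
  have hn := hp.three_le
  rw [Set.mem_Iio] at hi
  have hpath : IsInducedPath (H ⊔ SimpleGraph.edge z (p i)) n p :=
    hp.isInducedPath.congr (fun _ ha _ hb ↦ sup_edge_adj_of_notMem (.inl hp.notMem) ha hb)
      fun j hj ↦ ⟨j, hj, rfl⟩
  have hle := h.encard_path_le n p hpath fun x hx hxt ↦ ht' (hxt ▸ .inr hx)
  have hadj : ∀ j < n, (H ⊔ SimpleGraph.edge z (p i)).Adj z (p j) →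
      p j ∈ (H ⊔ SimpleGraph.edge z (p i)).neighborSet z ∩ p '' Set.Iio n :=
    fun j hj hzj ↦ ⟨hzj, j, hj, rfl⟩
  have hfirst := hadj 0 (by omega) (.inl ((hp.adj_iff 0 (by omega)).2 (.inl rfl)))
  have hlast := hadj (n - 1) (by omega) (.inl ((hp.adj_iff (n - 1) (by omega)).2 (by omega)))
  have hmid := hadj i hi (.inr ((SimpleGraph.edge_adj ..).2 ⟨.inl ⟨rfl, rfl⟩, hne⟩))
  have hends := mt (hp.adj_iff i hi).2 hzt
  have hinj : ∀ j < n, ∀ k < n, p j = p k → j = k := fun j hj k hk ↦ hp.isInducedPath.injOn hj hk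
  rcases eq_of_encard_le_two hle hfirst hmid hlast with h | h | h <;>
    have := hinj _ (by omega) _ (by omega) h <;> omega

-- The path starts at `t'` and continues with `t`. Dropping `t'` while adding the edge `zt` does not
-- change the number of neighbours of `z`, since `z` is adjacent to `t'` and not to `t` in `H`.
lemma encard_path_le_of_apply_zero (h : RootedCleanOn (H ⊔ SimpleGraph.edge z t) {t'}ᶜ z)
    (hsub : ∀ v, H.Adj t' v ↔ v = z ∨ v = t) (hzt : ¬ H.Adj z t) (hne : z ≠ t)
    (hp : IsInducedPath H n p) (hz : z ∉ p '' Set.Iio n) (h0 : p 0 = t') :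
    (H.neighborSet z ∩ p '' Set.Iio n).encard ≤ 2 := by
  obtain hn | hn := Nat.lt_or_ge 1 n
  · have h1 : p 1 = t := by
      have h01 := (hp.adj_iff 0 (by omega) 1 hn).2 (.inl rfl)
      rw [h0, hsub] at h01
      exact h01.resolve_left fun h1 ↦ hz ⟨1, hn, h1⟩
    set q : ℕ → W := fun i ↦ p (1 + i)
    set A := H.neighborSet z ∩ q '' Set.Iio (n - 1)
    have hq : IsInducedPath (H ⊔ SimpleGraph.edge z t) (n - 1) q :=
      (hp.subpath (by omega)).congr (fun _ ha _ hb ↦ sup_edge_adj_of_notMem (.inl hz) ha hb)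
        fun i hi ↦ ⟨1 + i, by grind, rfl⟩
    have hqt' : q '' Set.Iio (n - 1) ⊆ {t'}ᶜ := by
      rintro _ ⟨i, hi, rfl⟩ hit'
      have := hp.injOn (show 1 + i < n by grind) (show 0 < n by omega) (hit'.trans h0.symm)
      omega
    calc (H.neighborSet z ∩ p '' Set.Iio n).encard ≤ (insert t' A).encard := by
          refine Set.encard_le_encard ?_
          rintro _ ⟨hzi, _ | i, hi, rfl⟩
          exacts [.inl h0, .inr ⟨hzi, i, by grind, by grind⟩]
      _ ≤ A.encard + 1 := Set.encard_insert_le _ _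
      _ = (insert t A).encard := (Set.encard_insert_of_notMem fun ht ↦ hzt ht.1).symm
      _ ≤ ((H ⊔ SimpleGraph.edge z t).neighborSet z ∩ q '' Set.Iio (n - 1)).encard := by
          refine Set.encard_le_encard (Set.insert_subset ⟨.inr ?_, 0, by grind, h1⟩ fun v hv ↦ ?_)
          · exact (SimpleGraph.edge_adj ..).2 ⟨.inl ⟨rfl, rfl⟩, hne⟩
          · exact ⟨.inl hv.1, hv.2⟩
      _ ≤ 2 := h.encard_path_le _ q hq hqt'
  · refine encard_le_two_of_subset_pair (a := t') (b := t') ?_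
    rintro _ ⟨-, i, hi, rfl⟩
    grind

lemma encard_path_le_of_subdivision (h : RootedCleanOn (H ⊔ SimpleGraph.edge z t) {t'}ᶜ z)
    (hsub : ∀ v, H.Adj t' v ↔ v = z ∨ v = t) (hzt : ¬ H.Adj z t) (hne : z ≠ t)
    (hp : IsInducedPath H n p) : (H.neighborSet z ∩ p '' Set.Iio n).encard ≤ 2 := by
  by_cases hz : z ∈ p '' Set.Iio n
  · exact hp.encard_neighborSet_inter_le hz
  by_cases ht' : t' ∈ p '' Set.Iio n
  · obtain ⟨m, hm, hmt'⟩ := ht'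
    rw [Set.mem_Iio] at hm
    have hnbr : ∀ i < n, (i = m + 1 ∨ m = i + 1) → p i = t := fun i hi him ↦ by
      have := (hsub _).1 (hmt' ▸ (hp.adj_iff m hm i hi).2 him)
      exact this.resolve_left fun h ↦ hz ⟨i, hi, h⟩
    obtain rfl | hlast : m = 0 ∨ m = n - 1 := by
      by_contra! hmid
      have hpp : p (m - 1) = p (m + 1) :=
        (hnbr (m - 1) (by omega) (by omega)).trans (hnbr (m + 1) (by omega) (by omega)).symm
      have := hp.injOn (show m - 1 < n by omega) (show m + 1 < n by omega) hpp
      omega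
    · exact h.encard_path_le_of_apply_zero hsub hzt hne hp hz hmt'
    · rw [← image_Iio_reverse n p] at hz ⊢
      exact h.encard_path_le_of_apply_zero hsub hzt hne hp.reverse hz (by simpa [← hlast])
  · have hpath : IsInducedPath (H ⊔ SimpleGraph.edge z t) n p :=
      hp.congr (fun _ ha _ hb ↦ sup_edge_adj_of_notMem (.inl hz) ha hb) fun j hj ↦ ⟨j, hj, rfl⟩
    exact (encard_neighborSet_inter_le_sup_edge z _).trans
      (h.encard_path_le n p hpath (Set.subset_compl_singleton_iff.2 ht'))

lemma encard_hole_le_of_subdivision (h : RootedCleanOn (H ⊔ SimpleGraph.edge z t) {t'}ᶜ z)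
    (hsub : ∀ v, H.Adj t' v ↔ v = z ∨ v = t) (hzt : ¬ H.Adj z t) (hne : z ≠ t) {C : Set W}
    (hC : IsHole H C) (w : W) : (H.neighborSet w ∩ C).encard ≤ 2 := by
  by_cases hwt' : w = t'
  · exact encard_le_two_of_subset_pair fun v hv ↦ (hsub v).1 (hwt' ▸ hv.1)
  by_cases hwC : w ∈ C
  · exact hC.encard_neighborSet_inter_le hwC
  by_cases ht' : t' ∈ C
  · have hedge : (H ⊔ SimpleGraph.edge z t).Adj z t :=
      .inr ((SimpleGraph.edge_adj ..).2 ⟨.inl ⟨rfl, rfl⟩, hne⟩)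
    have hzt' : z ≠ t' := ((hsub z).2 (.inl rfl)).ne'
    have htt' : t ≠ t' := ((hsub t).2 (.inr rfl)).ne'
    obtain ⟨hzC, htC, hC'⟩ := hC.sdiff_subdivision hsub (fun a hat' hza hat ↦
      h.not_adj_of_adj_of_adj z hzt' a hat' t htt' (.inl hza) (.inl hat) hedge) ht'
    have hsubset : H.neighborSet w ∩ C ⊆
        (H ⊔ SimpleGraph.edge z t).neighborSet w ∩ (C \ {t'}) := by
      rintro v ⟨hwv, hvC⟩
      refine ⟨.inl hwv, hvC, ?_⟩
      rintro rfl
      exact ((hsub w).1 hwv.symm).elim (fun h ↦ hwC (h ▸ hzC)) fun h ↦ hwC (h ▸ htC)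
    exact (Set.encard_le_encard hsubset).trans
      (h.encard_hole_le _ (fun _ hv ↦ hv.2) hC' w hwt')
  · have hC' : IsHole (H ⊔ SimpleGraph.edge z t) C := hC.congr fun _ ha _ hb ↦
      sup_edge_adj_of_notMem (h.notMem_hole_of_sup_edge hzt hne hC ht') ha hb
    exact (encard_neighborSet_inter_le_sup_edge w C).trans
      (h.encard_hole_le C (Set.subset_compl_singleton_iff.2 ht') hC' w hwt')

theorem univ_of_subdivision (h : RootedCleanOn (H ⊔ SimpleGraph.edge z t) {t'}ᶜ z)
    (hsub : ∀ v, H.Adj t' v ↔ v = z ∨ v = t) (hzt : ¬ H.Adj z t) (hne : z ≠ t) :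
    RootedCleanOn H Set.univ z where
  not_adj_of_adj_of_adj a _ b _ c _ hab hbc hac := by
    have ht' : ∀ x y, H.Adj t' x → H.Adj t' y → ¬ H.Adj x y := by
      grind [H.adj_comm, H.irrefl]
    have hat' : a ≠ t' := by
      rintro rfl
      exact ht' b c hab hac hbc
    have hbt' : b ≠ t' := by
      rintro rfl
      exact ht' a c hab.symm hbc hac
    have hct' : c ≠ t' := by
      rintro rfl
      exact ht' a b hac.symm hbc.symm hab
    exact h.not_adj_of_adj_of_adj a hat' b hbt' c hct' (.inl hab) (.inl hbc) (.inl hac)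
  encard_hole_le C _ hC w _ := h.encard_hole_le_of_subdivision hsub hzt hne hC w
  encard_path_le _ _ hp _ := h.encard_path_le_of_subdivision hsub hzt hne hp

end RootedCleanOn

end Subdivision

/-- The common neighbours of `S₁ ∩ S₂` in `S₁ \ S₂`. When `S₁` and `S₂` are glued along
`S₁ ∩ S₂`, each of them looks to `S₂` like the apex of a cone. -/
def gluingApexes {W : Type*} (H : SimpleGraph W) (S₁ S₂ : Set W) : Set W :=
  {b ∈ S₁ \ S₂ | ∀ x ∈ S₁ ∩ S₂, H.Adj b x}

/-- `H` is the union of its subgraphs induced on `S₁` and `S₂`, and the common vertices of the two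
have the same neighbours in the first of them. -/
structure IsTwinGluing {W : Type*} (H : SimpleGraph W) (S₁ S₂ : Set W) : Prop where
  union_eq : S₁ ∪ S₂ = Set.univ
  not_adj : ∀ a ∉ S₁, ∀ b ∉ S₂, ¬ H.Adj a b
  adj_of_adj : ∀ x ∈ S₁ ∩ S₂, ∀ y ∈ S₁ ∩ S₂, ∀ b ∈ S₁, H.Adj x b → H.Adj y b

lemma exists_and_not_succ {Q : ℕ → Prop} {a b : ℕ} (hab : a ≤ b) (ha : Q a) (hb : ¬ Q b) :
    ∃ k, a ≤ k ∧ k < b ∧ Q k ∧ ¬ Q (k + 1) := by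
  induction b, hab using Nat.le_induction with
  | base => exact absurd ha hb
  | succ b hab ih =>
    by_cases hQ : Q b
    · exact ⟨b, hab, b.lt_succ_self, hQ, hb⟩
    · obtain ⟨k, hak, hkb, hk⟩ := ih hQ
      exact ⟨k, hak, hkb.trans b.lt_succ_self, hk⟩

namespace IsTwinGluing

variable {W : Type*} {H : SimpleGraph W} {S₁ S₂ C : Set W} {n : ℕ} {p : ℕ → W} {z : W}

lemma mem_right_of_notMem (hS : IsTwinGluing H S₁ S₂) {v : W} (hv : v ∉ S₁) : v ∈ S₂ :=
  ((Set.ext_iff.1 hS.union_eq v).2 trivial).resolve_left hv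

lemma mem_left_of_notMem (hS : IsTwinGluing H S₁ S₂) {v : W} (hv : v ∉ S₂) : v ∈ S₁ :=
  ((Set.ext_iff.1 hS.union_eq v).2 trivial).resolve_right hv

lemma mem_left_of_adj (hS : IsTwinGluing H S₁ S₂) {u v : W} (hu : u ∉ S₂) (huv : H.Adj u v) :
    v ∈ S₁ :=
  by_contra fun hv ↦ hS.not_adj v hv u hu huv.symm

lemma mem_right_of_adj (hS : IsTwinGluing H S₁ S₂) {u v : W} (hu : u ∉ S₁) (huv : H.Adj u v) :
    v ∈ S₂ :=
  by_contra fun hv ↦ hS.not_adj u hu v hv huv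

lemma mem_gluingApexes (hS : IsTwinGluing H S₁ S₂) {x b : W} (hx : x ∈ S₁ ∩ S₂) (hb : b ∉ S₂)
    (hbx : H.Adj b x) : b ∈ gluingApexes H S₁ S₂ :=
  have hb₁ := hS.mem_left_of_notMem hb
  ⟨⟨hb₁, hb⟩, fun y hy ↦ (hS.adj_of_adj x hx y hy b hb₁ hbx.symm).symm⟩

-- If the path left `S₂` before its visit to the complement of `S₁`, then it would enter and leave
-- that complement through two twins, and the predecessor of the first would also be adjacent to the
-- second.
lemma mem_right_of_lt (hS : IsTwinGluing H S₁ S₂) (hp : IsInducedPath H n p)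
    (hlast : p (n - 1) ∈ S₁) {a b : ℕ} (hba : b < a) (han : a < n) (ha : p a ∉ S₁) :
    p b ∈ S₂ := by
  by_contra hb
  obtain ⟨k, -, hka, hk, hk'⟩ := exists_and_not_succ (Q := (p · ∉ S₂)) hba.le hb
    (not_not.2 (hS.mem_right_of_notMem ha))
  obtain ⟨l, hal, hln, hl, hl'⟩ := exists_and_not_succ (Q := (p · ∉ S₁)) (by omega) ha
    (not_not.2 hlast)
  rw [not_not] at hk' hl'
  have hkk := (hp.adj_iff k (by omega) (k + 1) (by omega)).2 (.inl rfl)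
  have hll := (hp.adj_iff l (by omega) (l + 1) (by omega)).2 (.inl rfl)
  have hkS := hS.mem_left_of_adj hk hkk
  have hlS := hS.mem_right_of_adj hl hll
  have hlk := hS.adj_of_adj _ ⟨hkS, hk'⟩ _ ⟨hl', hlS⟩ _ (hS.mem_left_of_notMem hk) hkk.symm
  rw [hp.adj_iff (l + 1) (by omega) k (by omega)] at hlk
  obtain rfl : k + 1 = a := by omega
  exact ha hkS

lemma image_subset_or_subset (hS : IsTwinGluing H S₁ S₂) (hp : IsInducedPath H n p)
    (hfirst : p 0 ∈ S₁) (hlast : p (n - 1) ∈ S₁) :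
    p '' Set.Iio n ⊆ S₁ ∨ p '' Set.Iio n ⊆ S₂ := by
  refine or_iff_not_imp_left.2 fun h ↦ ?_
  obtain ⟨_, ⟨a, ha, rfl⟩, haS⟩ := Set.not_subset.1 h
  rintro _ ⟨b, hb, rfl⟩
  rw [Set.mem_Iio] at ha hb
  obtain hba | rfl | hab := lt_trichotomy b a
  · exact hS.mem_right_of_lt hp hlast hba ha haS
  · exact hS.mem_right_of_notMem haS
  · have hrev : ∀ i < n, n - 1 - (n - 1 - i) = i := fun i hi ↦ by omega
    have := hS.mem_right_of_lt hp.reverse (a := n - 1 - a) (b := n - 1 - b) (by simpa)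
      (by omega) (by omega) (by rwa [hrev a ha])
    rwa [hrev b hb] at this

lemma exists_mem_gluingApexes (hS : IsTwinGluing H S₁ S₂) (hz : z ∈ gluingApexes H S₁ S₂)
    (hC : IsHole H C) (hCS : ¬ C ⊆ S₁) : ∃ b ∈ gluingApexes H S₁ S₂, C ⊆ insert b S₂ := by
  by_cases hC₂ : C ⊆ S₂
  · exact ⟨z, hz, hC₂.trans (Set.subset_insert z S₂)⟩
  obtain ⟨b, hbC, hb⟩ := Set.not_subset.1 hC₂
  obtain ⟨n, p, hp, rfl⟩ := hC.exists_capped hbC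
  have hn := hp.three_le
  have hb0 : H.Adj b (p 0) := (hp.adj_iff 0 (by omega)).2 (.inl rfl)
  have hbn : H.Adj b (p (n - 1)) := (hp.adj_iff (n - 1) (by omega)).2 (by omega)
  have hp₂ : p '' Set.Iio n ⊆ S₂ :=
    (hS.image_subset_or_subset hp.isInducedPath (hS.mem_left_of_adj hb hb0)
      (hS.mem_left_of_adj hb hbn)).resolve_left
      fun h ↦ hCS (Set.insert_subset (hS.mem_left_of_notMem hb) h)
  have hX : p 0 ∈ S₁ ∩ S₂ := ⟨hS.mem_left_of_adj hb hb0, hp₂ ⟨0, by grind, rfl⟩⟩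
  exact ⟨b, hS.mem_gluingApexes hX hb hb0, Set.insert_subset_insert hp₂⟩

lemma encard_hole_le_of_subset_left (hS : IsTwinGluing H S₁ S₂) (h₁ : RootedCleanOn H S₁ z)
    (hC : IsHole H C) (hCS : C ⊆ S₁) (w : W) : (H.neighborSet w ∩ C).encard ≤ 2 := by
  by_cases hw : w ∈ S₁
  · exact h₁.encard_hole_le C hCS hC w hw
  have hX : H.neighborSet w ∩ C ⊆ S₁ ∩ S₂ := fun v hv ↦ ⟨hCS hv.2, hS.mem_right_of_adj hw hv.1⟩
  obtain h | ⟨c, hc⟩ := (H.neighborSet w ∩ C).eq_empty_or_nonempty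
  · simp [h]
  obtain ⟨n, p, hp, rfl⟩ := hC.exists_capped hc.2
  have hn := hp.three_le
  have h0 : p 0 ∈ insert c (p '' Set.Iio n) := .inr ⟨0, by grind, rfl⟩
  have hc0 : H.Adj c (p 0) := (hp.adj_iff 0 (by omega)).2 (.inl rfl)
  set C := insert c (p '' Set.Iio n)
  -- All neighbours of `w` on `C` are twins of `c`, hence adjacent to the neighbour `p 0` of `c`.
  calc (H.neighborSet w ∩ C).encard ≤ (H.neighborSet (p 0) ∩ C).encard :=
        Set.encard_le_encard fun v hv ↦
          ⟨(hS.adj_of_adj c (hX hc) v (hX hv) (p 0) (hCS h0) hc0).symm, hv.2⟩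
    _ ≤ 2 := hC.encard_neighborSet_inter_le h0

lemma encard_hole_le_of_subset_insert (hS : IsTwinGluing H S₁ S₂) {b : W}
    (hb : b ∈ gluingApexes H S₁ S₂) (h₁ : RootedCleanOn H S₁ z)
    (h₂ : RootedCleanOn H (insert b S₂) b) (hC : IsHole H C) (hCb : C ⊆ insert b S₂) (w : W) :
    (H.neighborSet w ∩ C).encard ≤ 2 := by
  by_cases hw : w ∈ insert b S₂
  · exact h₂.encard_hole_le C hCb hC w hw
  rw [Set.mem_insert_iff, not_or] at hw
  have hX : ∀ v ∈ C, v ≠ b → H.Adj w v → v ∈ S₁ ∩ S₂ := fun v hvC hvb hwv ↦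
    ⟨hS.mem_left_of_adj hw.2 hwv, (hCb hvC).resolve_left hvb⟩
  by_cases hwb : H.Adj w b
  · refine encard_le_two_of_subset_pair (a := b) (b := b) fun v hv ↦ ?_
    by_contra hvb
    have hv' := hX v hv.2 (by grind) hv.1
    exact h₁.not_adj_of_adj_of_adj w (hS.mem_left_of_notMem hw.2) b hb.1.1 v hv'.1 hwb
      (hb.2 v hv') hv.1
  · calc (H.neighborSet w ∩ C).encard ≤ (H.neighborSet b ∩ C).encard :=
          Set.encard_le_encard fun v hv ↦
            ⟨hb.2 v (hX v hv.2 (fun h ↦ hwb (h ▸ hv.1)) hv.1), hv.2⟩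
      _ ≤ 2 := h₂.encard_hole_le C hCb hC b (Set.mem_insert b S₂)

theorem rootedCleanOn_univ (hS : IsTwinGluing H S₁ S₂) (hz : z ∈ gluingApexes H S₁ S₂)
    (h₁ : RootedCleanOn H S₁ z)
    (h₂ : ∀ b ∈ gluingApexes H S₁ S₂, RootedCleanOn H (insert b S₂) b) :
    RootedCleanOn H Set.univ z where
  not_adj_of_adj_of_adj a _ b _ c _ hab hbc hac := by
    by_cases hmem : a ∈ S₁ ∧ b ∈ S₁ ∧ c ∈ S₁
    · exact h₁.not_adj_of_adj_of_adj a hmem.1 b hmem.2.1 c hmem.2.2 hab hbc hac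
    have hmem₂ : a ∈ S₂ ∧ b ∈ S₂ ∧ c ∈ S₂ := by
      grind [hS.mem_right_of_adj, hS.mem_right_of_notMem, H.adj_comm]
    exact (h₂ z hz).not_adj_of_adj_of_adj a (.inr hmem₂.1) b (.inr hmem₂.2.1) c (.inr hmem₂.2.2)
      hab hbc hac
  encard_hole_le C _ hC w _ := by
    by_cases hCS : C ⊆ S₁
    · exact hS.encard_hole_le_of_subset_left h₁ hC hCS w
    · obtain ⟨b, hb, hCb⟩ := hS.exists_mem_gluingApexes hz hC hCS
      exact hS.encard_hole_le_of_subset_insert hb h₁ (h₂ b hb) hC hCb w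
  encard_path_le n p hp _ := by
    obtain h | h := (H.neighborSet z ∩ p '' Set.Iio n).eq_empty_or_nonempty
    · simp [h]
    obtain ⟨m, q, hq, hfirst, hlast, hpq⟩ := hp.exists_trim h
    have hends := hS.image_subset_or_subset hq (hS.mem_left_of_adj hz.1.2 hfirst)
      (hS.mem_left_of_adj hz.1.2 hlast)
    calc (H.neighborSet z ∩ p '' Set.Iio n).encard
        ≤ (H.neighborSet z ∩ q '' Set.Iio (m + 1)).encard :=
          Set.encard_le_encard fun v hv ↦ ⟨hv.1, hpq hv⟩
      _ ≤ 2 := hends.elim (h₁.encard_path_le _ q hq) fun hq₂ ↦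
          (h₂ z hz).encard_path_le _ q hq (hq₂.trans (Set.subset_insert z S₂))

end IsTwinGluing

section Operations

lemma RootedCleanOn.not_adj_of_mem {V : Type*} {G : SimpleGraph V} {T : Set V}
    (h : RootedCleanOn (coneGraph G T) Set.univ none) : ∀ u ∈ T, ∀ v ∈ T, ¬ G.Adj u v :=
  fun u hu v hv huv ↦
    h.not_adj_of_adj_of_adj none trivial (some u) trivial (some v) trivial hu huv hv

lemma rootedCleanOn_coneGraph_top_bool :
    RootedCleanOn (coneGraph (⊤ : SimpleGraph Bool) {true}) Set.univ none := by
  have hN : ∀ (w : Option Bool) (S : Set (Option Bool)),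
      ((coneGraph (⊤ : SimpleGraph Bool) {true}).neighborSet w ∩ S).encard ≤ 2 := by
    intro w S
    obtain ⟨a, b, hab⟩ : ∃ a b : Option Bool, {w}ᶜ ⊆ ({a, b} : Set (Option Bool)) := by
      rcases w with _ | _ | _
      · exact ⟨some true, some false, by rintro (_ | _ | _) <;> simp⟩
      · exact ⟨none, some true, by rintro (_ | _ | _) <;> simp⟩
      · exact ⟨none, some false, by rintro (_ | _ | _) <;> simp⟩
    exact encard_le_two_of_subset_pair fun v hv ↦
      hab ((SimpleGraph.mem_neighborSet _ _ _).1 hv.1).ne'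
  refine ⟨?_, fun C _ _ w _ ↦ hN w C, fun n p _ _ ↦ hN none _⟩
  rintro (_ | _ | _) - (_ | _ | _) - (_ | _ | _) - <;> simp [coneGraph]

section AddVertex

variable {V : Type*} {G : SimpleGraph V} {T : Set V} {t u v : V}

lemma pendentGraph_adj_some_some : (pendentGraph G t).Adj (some u) (some v) ↔ G.Adj u v := by
  simp only [pendentGraph, SimpleGraph.fromRel_adj]
  grind [G.adj_comm, G.irrefl]

lemma pendentGraph_adj_none_some : (pendentGraph G t).Adj none (some v) ↔ v = t := by
  simp [pendentGraph]

lemma cloneGraph_adj_some_some : (cloneGraph G t).Adj (some u) (some v) ↔ G.Adj u v := by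
  simp only [cloneGraph, SimpleGraph.fromRel_adj]
  grind [G.adj_comm, G.irrefl]

lemma cloneGraph_adj_none_some : (cloneGraph G t).Adj none (some v) ↔ G.Adj t v := by
  simp [cloneGraph]

lemma RootedCleanOn.compl_some_none (h : RootedCleanOn (coneGraph G T) Set.univ none)
    {H : SimpleGraph (Option (Option V))}
    (hG : ∀ u v, H.Adj (some (some u)) (some (some v)) ↔ G.Adj u v)
    (hT : ∀ v, H.Adj none (some (some v)) ↔ v ∈ T) : RootedCleanOn H {some none}ᶜ none := by
  let g : G ↪g H :=
    ⟨⟨fun v ↦ some (some v), (Option.some_injective _).comp (Option.some_injective _)⟩, hG _ _⟩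
  have hcompl : insert none (Set.range g) = {some none}ᶜ := by
    ext (_ | _ | v) <;> simp [g]
  exact hcompl ▸ h.of_coneGraph g (by simp [g]) hT

lemma RootedCleanOn.pendent (h : RootedCleanOn (coneGraph G T) Set.univ none) (ht : t ∈ T) :
    RootedCleanOn (coneGraph (pendentGraph G t) (pendentT T t)) Set.univ none := by
  set H := coneGraph (pendentGraph G t) (pendentT T t)
  have hsub : ∀ v, H.Adj (some none) v ↔ v = none ∨ v = some (some t) := by
    rintro (_ | _ | v)
    · simp [H, coneGraph, pendentT]
    · simp
    · simp [H, coneGraph, pendentGraph_adj_none_some]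
  have hT : ∀ v, H.Adj none (some (some v)) ↔ v ∈ T ∧ v ≠ t := by simp [H, coneGraph, pendentT]
  refine univ_of_subdivision (t' := some none) (t := some (some t))
    (h.compl_some_none (fun u v ↦ ?_) fun v ↦ ?_) hsub (fun hadj ↦ ((hT t).1 hadj).2 rfl) nofun
  · simp [SimpleGraph.edge_adj, H, coneGraph, pendentGraph_adj_some_some]
  · rw [SimpleGraph.sup_adj, hT]
    obtain rfl | hvt := eq_or_ne v t <;> simp_all [SimpleGraph.edge_adj]

lemma RootedCleanOn.clone (h : RootedCleanOn (coneGraph G T) Set.univ none) (ht : t ∈ T) :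
    RootedCleanOn (coneGraph (cloneGraph G t) (cloneT T)) Set.univ none := by
  set H := coneGraph (cloneGraph G t) (cloneT T)
  have htwin : ∀ v, H.Adj (some (some t)) v ↔ H.Adj (some none) v := by
    rintro (_ | _ | v)
    · simp [H, coneGraph, cloneT, ht]
    · simp [H, coneGraph, (cloneGraph G t).adj_comm _ none, cloneGraph_adj_none_some]
    · simp [H, coneGraph, cloneGraph_adj_none_some, cloneGraph_adj_some_some]
  exact univ_of_twins (t := some (some t)) (t' := some none) nofun htwin nofun nofun
    (h.compl_some_none (fun _ _ ↦ cloneGraph_adj_some_some) fun v ↦ by simp [H, coneGraph, cloneT])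

end AddVertex

section Join

variable {V₁ V₂ : Type u} {G₁ : SimpleGraph V₁} {G₂ : SimpleGraph V₂} {T₁ X : Set V₁}
  {T₂ : Set V₂} {φ : X ≃ T₂}

lemma joinGraph_adj_inl_inl (hT₂ : ∀ u ∈ T₂, ∀ v ∈ T₂, ¬ G₂.Adj u v) {a b : V₁} :
    (joinGraph G₁ G₂ X T₂ φ).Adj (.inl a) (.inl b) ↔ G₁.Adj a b := by
  simp only [joinGraph, SimpleGraph.fromRel_adj]
  grind [G₁.adj_comm, G₁.irrefl]

lemma joinGraph_adj_inr_inr {a b : {v // v ∉ T₂}} :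
    (joinGraph G₁ G₂ X T₂ φ).Adj (.inr a) (.inr b) ↔ G₂.Adj a b := by
  simp only [joinGraph, SimpleGraph.fromRel_adj]
  grind [G₂.adj_comm, G₂.irrefl]

lemma joinGraph_adj_inl_inr {a : V₁} {b : {v // v ∉ T₂}} :
    (joinGraph G₁ G₂ X T₂ φ).Adj (.inl a) (.inr b) ↔ ∃ h : a ∈ X, G₂.Adj (φ ⟨a, h⟩) b := by
  simp only [joinGraph, SimpleGraph.fromRel_adj]
  grind

open Classical in
/-- The map from the vertices of the second graft to those of the join, which identifies each
vertex of `T₂` with its partner in `X`. -/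
noncomputable def joinRight (φ : X ≃ T₂) (v : V₂) : V₁ ⊕ {v // v ∉ T₂} :=
  if h : v ∈ T₂ then .inl (φ.symm ⟨v, h⟩) else .inr ⟨v, h⟩

lemma joinRight_of_mem {v : V₂} (hv : v ∈ T₂) : joinRight φ v = .inl ↑(φ.symm ⟨v, hv⟩) :=
  dif_pos hv

lemma joinRight_of_notMem {v : V₂} (hv : v ∉ T₂) : joinRight φ v = .inr ⟨v, hv⟩ :=
  dif_neg hv

lemma joinRight_injective : Function.Injective (joinRight φ) := by
  intro a b hab
  by_cases ha : a ∈ T₂ <;> by_cases hb : b ∈ T₂ <;>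
    simp_all [joinRight, Subtype.val_inj]

lemma range_joinRight : Set.range (joinRight φ) = Sum.inl '' X ∪ Set.range Sum.inr := by
  ext x
  constructor
  · rintro ⟨v, rfl⟩
    by_cases hv : v ∈ T₂
    · exact .inl ⟨_, (φ.symm ⟨v, hv⟩).2, (joinRight_of_mem hv).symm⟩
    · exact .inr ⟨_, (joinRight_of_notMem hv).symm⟩
  · rintro (⟨a, ha, rfl⟩ | ⟨b, rfl⟩)
    · exact ⟨φ ⟨a, ha⟩, by simp [joinRight_of_mem]⟩
    · exact ⟨b, joinRight_of_notMem b.2⟩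

lemma joinGraph_adj_joinRight (hX : ∀ u ∈ X, ∀ v ∈ X, ¬ G₁.Adj u v)
    (hT₂ : ∀ u ∈ T₂, ∀ v ∈ T₂, ¬ G₂.Adj u v) {a b : V₂} :
    (joinGraph G₁ G₂ X T₂ φ).Adj (joinRight φ a) (joinRight φ b) ↔ G₂.Adj a b := by
  by_cases ha : a ∈ T₂ <;> by_cases hb : b ∈ T₂
  · simp [joinRight, ha, hb, joinGraph_adj_inl_inl hT₂, hX, hT₂]
  · simp [joinRight, ha, hb, joinGraph_adj_inl_inr]
  · simp [joinRight, ha, hb, SimpleGraph.adj_comm _ (Sum.inr _), joinGraph_adj_inl_inr,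
      G₂.adj_comm a]
  · simp [joinRight, ha, hb, joinGraph_adj_inr_inr]

lemma insert_none_range_inter :
    insert none (Set.range (some ∘ Sum.inl)) ∩ some '' (Sum.inl '' X ∪ Set.range Sum.inr) =
      (some ∘ Sum.inl (β := {v // v ∉ T₂})) '' X := by
  ext (_ | a | b) <;> simp

lemma isTwinGluing_coneGraph_joinGraph (hT₂ : ∀ u ∈ T₂, ∀ v ∈ T₂, ¬ G₂.Adj u v) (hX : X ⊆ T₁)
    (htwin : ∀ x ∈ X, ∀ y ∈ X, G₁.neighborSet x = G₁.neighborSet y) :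
    IsTwinGluing (coneGraph (joinGraph G₁ G₂ X T₂ φ) (Sum.inl '' T₁))
      (insert none (Set.range (some ∘ Sum.inl))) (some '' (Sum.inl '' X ∪ Set.range Sum.inr)) where
  union_eq := by
    ext (_ | a | b)
    · simp
    · simp
    · exact iff_of_true (.inr ⟨_, .inr ⟨b, rfl⟩, rfl⟩) trivial
  not_adj := by
    rintro (_ | a | b) ha
    · simp at ha
    · simp at ha
    · rintro (_ | a' | b') hb hab
      · simp [coneGraph] at hab
      · obtain ⟨h, -⟩ := joinGraph_adj_inl_inr.1 (SimpleGraph.Adj.symm hab)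
        exact hb ⟨_, .inl ⟨a', h, rfl⟩, rfl⟩
      · exact hb ⟨_, .inr ⟨b', rfl⟩, rfl⟩
  adj_of_adj := by
    rw [insert_none_range_inter]
    rintro _ ⟨x, hx, rfl⟩ _ ⟨y, hy, rfl⟩ _ (rfl | ⟨b, rfl⟩) hxb
    · exact ⟨y, hX hy, rfl⟩
    · have hxb' : b ∈ G₁.neighborSet x := (joinGraph_adj_inl_inl hT₂).1 hxb
      rw [htwin x hx y hy] at hxb'
      exact (joinGraph_adj_inl_inl hT₂).2 hxb'

lemma RootedCleanOn.join (h₁ : RootedCleanOn (coneGraph G₁ T₁) Set.univ none)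
    (h₂ : RootedCleanOn (coneGraph G₂ T₂) Set.univ none) (hX : X ⊆ T₁)
    (htwin : ∀ x ∈ X, ∀ y ∈ X, G₁.neighborSet x = G₁.neighborSet y) (φ : X ≃ T₂) :
    RootedCleanOn (coneGraph (joinGraph G₁ G₂ X T₂ φ) (Sum.inl '' T₁)) Set.univ none := by
  have hT₂ := h₂.not_adj_of_mem
  have hXstable : ∀ u ∈ X, ∀ v ∈ X, ¬ G₁.Adj u v :=
    fun u hu v hv ↦ h₁.not_adj_of_mem u (hX hu) v (hX hv)
  set H := coneGraph (joinGraph G₁ G₂ X T₂ φ) (Sum.inl '' T₁)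
  let g₁ : G₁ ↪g H := ⟨⟨some ∘ Sum.inl, (Option.some_injective _).comp Sum.inl_injective⟩,
    joinGraph_adj_inl_inl hT₂⟩
  let g₂ : G₂ ↪g H := ⟨⟨some ∘ joinRight φ, (Option.some_injective _).comp joinRight_injective⟩,
    joinGraph_adj_joinRight hXstable hT₂⟩
  have hg₁ : Set.range g₁ = Set.range (some ∘ Sum.inl) := rfl
  have hg₂ : Set.range g₂ = some '' (Sum.inl '' X ∪ Set.range Sum.inr) := by
    rw [← range_joinRight (φ := φ), ← Set.range_comp]
    rfl
  have hS : IsTwinGluing H (insert none (Set.range g₁)) (Set.range g₂) := by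
    rw [hg₁, hg₂]
    exact isTwinGluing_coneGraph_joinGraph hT₂ hX htwin
  refine hS.rootedCleanOn_univ (z := none) ?_ (h₁.of_coneGraph g₁ ?_ ?_) fun b hb ↦
    h₂.of_coneGraph g₂ hb.1.2 fun v ↦ ?_
  · refine ⟨⟨.inl rfl, by rw [hg₂]; simp⟩, ?_⟩
    rw [hg₁, hg₂, insert_none_range_inter]
    rintro _ ⟨x, hx, rfl⟩
    exact ⟨x, hX hx, rfl⟩
  · simp [hg₁]
  · exact fun v ↦ Sum.inl_injective.mem_set_image
  · by_cases hv : v ∈ T₂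
    · have hgv : g₂ v = g₁ (φ.symm ⟨v, hv⟩) := congrArg some (joinRight_of_mem hv)
      exact iff_of_true (hb.2 _ ⟨hgv ▸ .inr ⟨_, rfl⟩, v, rfl⟩) hv
    · have hgv : g₂ v = some (.inr ⟨v, hv⟩) := congrArg some (joinRight_of_notMem hv)
      refine iff_of_false (fun hbv ↦ hS.not_adj _ ?_ b hb.1.2 hbv.symm) hv
      simp [hgv, hg₁]

end Join

theorem Obtainable.rootedCleanOn_coneGraph {P : GraftData} (hP : Obtainable P) :
    RootedCleanOn (coneGraph P.G P.T) Set.univ none := by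
  induction hP with
  | base => exact rootedCleanOn_coneGraph_top_bool
  | pendent _ _ _ ht ih => exact ih.pendent ht
  | clone _ _ _ ht ih => exact ih.clone ht
  | join _ _ _ _ _ hX hnb φ ihP ihQ => exact ihP.join ihQ hX hnb φ

end Operations

section Clean

variable {V W U : Type*} {F : SimpleGraph U} {H : SimpleGraph W} {z : W} {M : Set U}

lemma range_induce_comp_symm {A : SimpleGraph V} {s : Set U} (e : F.induce s ≃g A) :
    Set.range ((SimpleGraph.Embedding.induce s).comp e.symm.toEmbedding) = s :=
  (e.symm.surjective.range_comp Subtype.val).trans Subtype.range_coe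

lemma three_le_encard_neighborSet_inter_image (j : F ↪g H) {w : U}
    (hw : 3 ≤ (F.neighborSet w).ncard) :
    3 ≤ (H.neighborSet (j w) ∩ j '' {u | u ≠ w}).encard := by
  have hsub : F.neighborSet w ⊆ {u | u ≠ w} := fun u hu ↦ SimpleGraph.Adj.ne' hu
  rw [← image_neighborSet_inter, j.injective.encard_image, Set.inter_eq_left.2 hsub]
  exact (Nat.cast_le (α := ℕ∞).2 hw).trans (Set.ncard_le_encard _)

namespace RootedCleanOn

lemma not_isWheel (h : RootedCleanOn H Set.univ z) (j : F ↪g H) : ¬ IsWheel F := by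
  rintro ⟨w, n, hn, ⟨e⟩, hw⟩
  have hhole := isHole_range_of_cycleGraph hn
    (j.comp ((SimpleGraph.Embedding.induce _).comp e.symm.toEmbedding))
  rw [SimpleGraph.Embedding.coe_comp, Set.range_comp, range_induce_comp_symm e] at hhole
  have := (three_le_encard_neighborSet_inter_image j hw).trans
    (h.encard_hole_le _ (Set.subset_univ _) hhole (j w) trivial)
  exact absurd this (by decide)

lemma not_isMountablePath (h : RootedCleanOn H Set.univ z) (j : F ↪g H)
    (hM : ∀ v ∈ M, H.Adj z (j v)) : ¬ IsMountablePath F M := by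
  rintro ⟨⟨n, ⟨e⟩⟩, hcard⟩
  obtain ⟨v, -⟩ : M.Nonempty := Set.nonempty_of_ncard_ne_zero (by omega)
  obtain ⟨n, rfl⟩ : ∃ k, n = k + 1 := Nat.exists_eq_add_one.2 (Fin.pos (e v))
  obtain ⟨p, hp, himage, -⟩ := exists_isInducedPath_of_pathGraph (j.comp e.symm.toEmbedding)
  have hsub : j '' M ⊆ H.neighborSet z ∩ p '' Set.Iio (n + 1) := by
    rintro _ ⟨u, hu, rfl⟩
    exact ⟨hM u hu, himage ▸ ⟨e u, congrArg j (e.symm_apply_apply u)⟩⟩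
  have hle : (3 : ℕ∞) ≤ 2 := calc
    3 ≤ (M.ncard : ℕ∞) := Nat.cast_le.2 hcard
    _ ≤ M.encard := Set.ncard_le_encard M
    _ = (j '' M).encard := (j.injective.encard_image M).symm
    _ ≤ _ := Set.encard_le_encard hsub
    _ ≤ 2 := h.encard_path_le _ p hp (Set.subset_univ _)
  exact absurd hle (by decide)

lemma isCappedPath_of_adj_ends (h : RootedCleanOn H Set.univ z) {n : ℕ} {p : ℕ → W}
    (hp : IsInducedPath H (n + 1) p) (hn : 2 ≤ n) (hz : z ∉ p '' Set.Iio (n + 1))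
    (hzero : H.Adj z (p 0)) (hlast : H.Adj z (p n)) : IsCappedPath H (n + 1) p z := by
  refine ⟨hp, by omega, hz, fun i hi ↦ ⟨fun hi' ↦ ?_, ?_⟩⟩
  · have hle := h.encard_path_le _ p hp (Set.subset_univ _)
    obtain h | h | h := eq_of_encard_le_two hle (a := p 0) (b := p n) (c := p i)
      ⟨hzero, 0, by simp, rfl⟩ ⟨hlast, n, by simp, rfl⟩ ⟨hi', i, hi, rfl⟩
    all_goals have := hp.injOn (by grind) (by grind) h; grind
  · grind

-- The apex `z` closes the path of a guarded fan to a hole, and the pivot is the hub of a wheel.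
lemma not_isGuardedFan (h : RootedCleanOn H Set.univ z) (j : F ↪g H) (hz : z ∉ Set.range j)
    (hM : ∀ v ∈ M, H.Adj z (j v)) : ¬ IsGuardedFan F M := by
  rintro ⟨f, n, e, hf, hzero, hlast⟩
  obtain ⟨p, hp, hrange, hpe⟩ := exists_isInducedPath_of_pathGraph
    (j.comp ((SimpleGraph.Embedding.induce _).comp e.symm.toEmbedding))
  have himage : p '' Set.Iio (n + 1) = j '' {u | u ≠ f} := by
    rw [hrange, SimpleGraph.Embedding.coe_comp, Set.range_comp, range_induce_comp_symm e]
  have hthree : ¬ (H.neighborSet (j f) ∩ p '' Set.Iio (n + 1)).encard ≤ 2 := fun hle ↦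
    absurd ((himage ▸ three_le_encard_neighborSet_inter_image j hf).trans hle) (by decide)
  have hn : 2 ≤ n := by
    by_contra! hn
    refine hthree (encard_le_two_of_subset_pair (a := p 0) (b := p 1) ?_)
    rintro _ ⟨-, i, hi, rfl⟩
    grind
  have hcap : IsCappedPath H (n + 1) p z := by
    refine h.isCappedPath_of_adj_ends hp hn ?_ (hpe 0 ▸ hM _ hzero) ?_
    · exact himage ▸ fun hz' ↦ hz (Set.image_subset_range _ _ hz')
    · exact (Fin.val_last n ▸ hpe (Fin.last n)) ▸ hM _ hlast
  refine hthree (le_trans (Set.encard_le_encard ?_)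
    (h.encard_hole_le _ (Set.subset_univ _) ⟨_, _, _, hcap, rfl⟩ (j f) trivial))
  exact Set.inter_subset_inter_right _ (Set.subset_insert _ _)

theorem isCleanGraft {G : SimpleGraph V} {T : Set V}
    (h : RootedCleanOn (coneGraph G T) Set.univ none) : IsCleanGraft G T := by
  classical
  let j (s : Set V) : G.induce s ↪g coneGraph G T :=
    { toFun v := some v.1
      inj' u v huv := Subtype.ext (Option.some_injective _ huv)
      map_rel_iff' := Iff.rfl }
  refine ⟨fun s hs ↦ ?_, h.not_adj_of_mem, fun s ↦ h.not_isWheel (j s),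
    fun s ↦ h.not_isGuardedFan (j s) ?_ fun v hv ↦ hv,
    fun s ↦ h.not_isMountablePath (j s) fun v hv ↦ hv⟩
  · obtain ⟨a, b, c, hab, hac, hbc, -⟩ := SimpleGraph.is3Clique_iff.1 hs
    exact h.not_adj_of_adj_of_adj (some a) trivial (some b) trivial (some c) trivial hab hbc hac
  · rintro ⟨v, hv⟩
    exact Option.some_ne_none _ hv

end RootedCleanOn

end Clean

/-- Every graft obtainable from `(K₂, {t})` by a finite sequence of pendent, clone and join
operations is clean; in particular its underlying graph contains no induced wheel. -/
theorem obtainable_isCleanGraft (P : GraftData) (hP : Obtainable P) :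
    IsCleanGraft P.G P.T ∧ ∀ s : Set P.V, ¬ IsWheel (P.G.induce s) := by
  have hclean : IsCleanGraft P.G P.T := hP.rootedCleanOn_coneGraph.isCleanGraft
  exact ⟨hclean, hclean.2.2.1⟩
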